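/- Let u be a real number with 0 < |u| < 1/2, let L ≥ 0 and r ≥ 0. Then ∑_{k=2}^∞ r^{k−2} · 2^{k−1} · ∑_{ℓ=2}^k I_{k,ℓ}(u,L) · Ĩ_{k,ℓ}(u,L) = (2πu / sin(2πu)) · ∑_{p=0}^∞ (u^{2p} / (2p+1)!!) · ∑_{m=p+1}^∞ L^{2m} · r^{m−p−1} / (2^m · m! · (m−p−1)!), where (2p+1)!! = (2p+1)!/(2^p·p!) and all series converge absolutely. -/

import Mathlib

open Real MeasureTheory

/-- `I_{k,ℓ}(u,L)`: the integral of `exp(2u(v₁+⋯+v_{ℓ−1}))` over the open simplex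
`{v ∈ ℝ^{k−1} : vᵢ > 0, v₁+⋯+v_{k−1} < L/2}` (coordinates are 0-indexed:
`v i` is `v_{i+1}`). -/
noncomputable def Ikl (k l : ℕ) (u L : ℝ) : ℝ :=
  ∫ v in {v : Fin (k-1) → ℝ | (∀ i, 0 < v i) ∧ ∑ i, v i < L/2},
    Real.exp (2 * u * ∑ i ∈ Finset.univ.filter (fun i : Fin (k-1) => i.val < l - 1), v i)

/-- The `j`-th (1-indexed) coordinate `w_j` for `1 ≤ j ≤ k−1`, with the convention
`w_k = L/2 − (w₁+⋯+w_{k−1})`. -/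
noncomputable def wcoord (k : ℕ) (L : ℝ) (w : Fin (k-1) → ℝ) (j : ℕ) : ℝ :=
  if h : j - 1 < k - 1 then w ⟨j - 1, h⟩ else L/2 - ∑ i, w i

/-- `Ĩ_{k,ℓ}(u,L)`: the integral of
`exp(−2u(w₂+⋯+w_ℓ))·(1−e^{−w_ℓ})^{−2u}·(1−e^{−w₁})^{2u}` over the open simplex
`{w ∈ ℝ^{k−1} : wᵢ > 0, w₁+⋯+w_{k−1} < L/2}`, where `w_k = L/2 − (w₁+⋯+w_{k−1})`. -/
noncomputable def Itkl (k l : ℕ) (u L : ℝ) : ℝ :=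
  ∫ w in {w : Fin (k-1) → ℝ | (∀ i, 0 < w i) ∧ ∑ i, w i < L/2},
    Real.exp (-(2*u) * ∑ j ∈ Finset.Icc 2 l, wcoord k L w j)
      * (1 - Real.exp (-(wcoord k L w l))) ^ (-(2*u))
      * (1 - Real.exp (-(wcoord k L w 1))) ^ (2*u)

/-!
Write `s = 2u` and let `F s a b` be the convolution of `a` copies of `x ↦ exp (s x)` and `b` copies
of `1` on the positive half-line. Then `I_{k,ℓ}` is `F s (ℓ-1) (k-ℓ+1)` evaluated at `L/2`. The
integrand of `Ĩ_{k,ℓ}` is also a product of functions of the single coordinates, and convolution is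
commutative, so the two factors containing a power of `1 - e^{-w}` can be convolved first; the
result is a Beta integral, by the reflection formula equal to `πs / sin (πs)` times `F (-s) 1 1`.
Hence `Ĩ_{k,ℓ}` is `πs / sin (πs)` times `F (-s) (ℓ-1) (k-ℓ+1)` at `L/2`.

It remains to evaluate `∑_{a+b=n} F s (a+1) (b+1) A * F (-s) (a+1) (b+1) A`. By the partial fraction
relation `s F s (a+1) (b+1) = F s (a+1) b - F s a (b+1)`, the derivative in `t` of
`e^{st} ∑ F s (a+1) (b+1) (A-t) * F (-s) (a+1) (b+1) (A+t)` telescopes to a multiple of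
`sinh (st) (A² - t²)ⁿ`, and the sum vanishes at `t = A`. Integrating over `[0, A]` and expanding
`sinh` gives a series in `u²`; summing it over `n` first or over `p` first yields the two sides.
-/

open Finset.HasAntidiagonal (antidiagonal)
open scoped ENNReal Nat

section Antidiagonal

lemma sum_antidiagonal_succ_left_sub_succ_right {M : Type*} [AddCommGroup M] (f : ℕ → ℕ → M)
    (n : ℕ) :
    ∑ x ∈ antidiagonal n, (f (x.1 + 1) x.2 - f x.1 (x.2 + 1)) =
      f (n + 1) 0 - f 0 (n + 1) := by
  have hleft := Finset.Nat.sum_antidiagonal_succ (n := n) (f := fun x => f x.1 x.2)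
  have hright := Finset.Nat.sum_antidiagonal_succ' (n := n) (f := fun x => f x.1 x.2)
  rw [Finset.sum_sub_distrib, sub_eq_sub_iff_add_eq_add, add_comm, ← hleft, hright]

lemma sum_Icc_two_eq_sum_antidiagonal {M : Type*} [AddCommMonoid M] (f : ℕ → M) (n : ℕ) :
    ∑ l ∈ Finset.Icc 2 (n + 2), f l = ∑ x ∈ antidiagonal n, f (x.1 + 2) := by
  rw [Finset.Nat.sum_antidiagonal_eq_sum_range_succ_mk, ← Finset.Ico_add_one_right_eq_Icc,
    Finset.sum_Ico_eq_sum_range]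
  exact Finset.sum_congr (by simp) fun i _ => by rw [add_comm]

end Antidiagonal

section ExpPrimitive

lemma hasDerivAt_exp_const_mul (s x : ℝ) :
    HasDerivAt (fun x => exp (s * x)) (s * exp (s * x)) x := by
  simpa [mul_comm] using ((hasDerivAt_id x).const_mul s).exp

/-- The solution vanishing at `0` of the linear equation `dy/dx = s * y + h`; on the positive
half-line it is the convolution of `h` with `t ↦ exp (s * t)`. -/
noncomputable def expPrimitive (s : ℝ) (h : ℝ → ℝ) (x : ℝ) : ℝ :=
  exp (s * x) * ∫ t in 0..x, exp (-(s * t)) * h t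

lemma hasDerivAt_expPrimitive (s : ℝ) {h : ℝ → ℝ} (hh : Continuous h) (x : ℝ) :
    HasDerivAt (expPrimitive s h) (s * expPrimitive s h x + h x) x := by
  have hint : HasDerivAt (fun x => ∫ t in 0..x, exp (-(s * t)) * h t) (exp (-(s * x)) * h x) x :=
    (Continuous.integral_hasStrictDerivAt (by fun_prop) 0 x).hasDerivAt
  refine ((hasDerivAt_exp_const_mul s x).mul hint).congr_deriv ?_
  have hexp : exp (s * x) * exp (-(s * x)) = 1 := by rw [← exp_add, add_neg_cancel, exp_zero]
  rw [expPrimitive]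
  linear_combination h x * hexp

lemma continuous_expPrimitive (s : ℝ) {h : ℝ → ℝ} (hh : Continuous h) :
    Continuous (expPrimitive s h) :=
  continuous_iff_continuousAt.2 fun x => (hasDerivAt_expPrimitive s hh x).continuousAt

lemma expPrimitive_nonneg (s : ℝ) {h : ℝ → ℝ} (hh : ∀ x, 0 ≤ x → 0 ≤ h x) {x : ℝ} (hx : 0 ≤ x) :
    0 ≤ expPrimitive s h x :=
  mul_nonneg (exp_pos _).le <| intervalIntegral.integral_nonneg hx fun t ht =>
    mul_nonneg (exp_pos _).le (hh t ht.1)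

lemma expPrimitive_zero_pow_div_factorial (b : ℕ) :
    expPrimitive 0 (fun x => x ^ b / (b ! : ℝ)) = fun x => x ^ (b + 1) / ((b + 1)! : ℝ) := by
  ext x
  simp only [expPrimitive, zero_mul, exp_zero, neg_zero, one_mul]
  rw [intervalIntegral.integral_div, integral_pow, Nat.factorial_succ]
  push_cast
  field_simp
  simp

lemma eq_zero_of_hasDerivAt_const_mul_self {s : ℝ} {y : ℝ → ℝ}
    (hy : ∀ x, HasDerivAt y (s * y x) x) (h0 : y 0 = 0) (x : ℝ) : y x = 0 := by
  have hderiv (x : ℝ) : HasDerivAt (fun x => exp (-s * x) * y x) 0 x :=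
    ((hasDerivAt_exp_const_mul (-s) x).mul (hy x)).congr_deriv (by ring)
  have hconst : exp (-s * x) * y x = exp (-s * 0) * y 0 :=
    is_const_of_deriv_eq_zero (fun x => (hderiv x).differentiableAt) (fun x => (hderiv x).deriv) x 0
  rw [h0, mul_zero] at hconst
  exact (mul_eq_zero.1 hconst).resolve_left (exp_pos _).ne'

end ExpPrimitive

section ExpKernel

/-- The convolution on the positive half-line of `a` copies of `x ↦ exp (s * x)` and `b` copies of
the constant `1`, that is, the inverse Laplace transform of `p ↦ (p - s)⁻ᵃ p⁻ᵇ`. The point mass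
arising for `a = b = 0` is replaced by `0`, which keeps the differential equations below valid. -/
noncomputable def expKernel (s : ℝ) : ℕ → ℕ → ℝ → ℝ
  | 0, 0 => fun _ => 0
  | 0, b + 1 => fun x => x ^ b / b !
  | a + 1, 0 => fun x => exp (s * x) * (x ^ a / a !)
  | a + 1, b + 1 => expPrimitive s (expKernel s a (b + 1))

@[fun_prop]
lemma continuous_expKernel (s : ℝ) (a b : ℕ) : Continuous (expKernel s a b) := by
  induction a generalizing b with
  | zero => cases b <;> simp only [expKernel] <;> fun_prop
  | succ a ih =>
    cases b with
    | zero => simp only [expKernel]; fun_prop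
    | succ b => exact continuous_expPrimitive s (ih (b + 1))

lemma expKernel_nonneg (s : ℝ) (a b : ℕ) {x : ℝ} (hx : 0 ≤ x) : 0 ≤ expKernel s a b x := by
  induction a generalizing b x with
  | zero => cases b <;> simp only [expKernel] <;> positivity
  | succ a ih =>
    cases b with
    | zero => simp only [expKernel]; positivity
    | succ b => exact expPrimitive_nonneg s (fun _ ht => ih _ ht) hx

lemma expKernel_apply_zero (s : ℝ) (a b : ℕ) :
    expKernel s a b 0 = if a + b = 1 then 1 else 0 := by
  rcases a with _ | a <;> rcases b with _ | b
  · simp [expKernel]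
  · rcases b with _ | b <;> simp [expKernel]
  · rcases a with _ | a <;> simp [expKernel]
  · simp [expKernel, expPrimitive, show a + 1 + (b + 1) ≠ 1 by lia]

lemma hasDerivAt_pow_succ_div_factorial (n : ℕ) (x : ℝ) :
    HasDerivAt (fun x : ℝ => x ^ (n + 1) / (n + 1)!) (x ^ n / n !) x := by
  refine ((hasDerivAt_pow (n + 1) x).div_const _).congr_deriv ?_
  rw [Nat.factorial_succ, Nat.add_sub_cancel]
  push_cast
  field_simp

lemma hasDerivAt_expKernel_zero_succ (s : ℝ) (b : ℕ) (x : ℝ) :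
    HasDerivAt (expKernel s 0 (b + 1)) (expKernel s 0 b x) x := by
  cases b with
  | zero => simpa [expKernel] using hasDerivAt_const x (1 : ℝ)
  | succ b => exact hasDerivAt_pow_succ_div_factorial b x

lemma hasDerivAt_expKernel_succ (s : ℝ) (a b : ℕ) (x : ℝ) :
    HasDerivAt (expKernel s (a + 1) b) (s * expKernel s (a + 1) b x + expKernel s a b x) x := by
  rcases b with _ | b
  · rcases a with _ | a
    · simpa [expKernel] using hasDerivAt_exp_const_mul s x
    · refine ((hasDerivAt_exp_const_mul s x).mul
        (hasDerivAt_pow_succ_div_factorial a x)).congr_deriv ?_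
      simp only [expKernel, mul_assoc]
  · exact hasDerivAt_expPrimitive s (continuous_expKernel s a (b + 1)) x

/-- Partial fractions: this is `s (p - s)⁻¹ p⁻¹ = (p - s)⁻¹ - p⁻¹` on the Laplace side. -/
lemma mul_expKernel_succ_succ (s : ℝ) (a b : ℕ) (x : ℝ) :
    s * expKernel s (a + 1) (b + 1) x = expKernel s (a + 1) b x - expKernel s a (b + 1) x := by
  let D (a : ℕ) (x : ℝ) : ℝ :=
    s * expKernel s (a + 1) (b + 1) x - expKernel s (a + 1) b x + expKernel s a (b + 1) x
  suffices h : D a x = 0 by linear_combination h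
  have hzero (a : ℕ) : D a 0 = 0 := by
    simp [D, expKernel_apply_zero, show a + 1 + b = a + (b + 1) by lia,
      show a + 1 + (b + 1) ≠ 1 by lia]
  have hderiv (a : ℕ) (x : ℝ) := ((hasDerivAt_expKernel_succ s a (b + 1) x).const_mul s).sub
    (hasDerivAt_expKernel_succ s a b x)
  induction a generalizing x with
  | zero =>
    refine eq_zero_of_hasDerivAt_const_mul_self (s := s) (fun x => ?_) (hzero 0) x
    refine ((hderiv 0 x).add (hasDerivAt_expKernel_zero_succ s b x)).congr_deriv ?_
    simp only [D]
    ring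
  | succ a ih =>
    refine eq_zero_of_hasDerivAt_const_mul_self (s := s) (fun x => ?_) (hzero (a + 1)) x
    refine ((hderiv (a + 1) x).add (hasDerivAt_expKernel_succ s a (b + 1) x)).congr_deriv ?_
    simp only [D] at ih ⊢
    linear_combination ih x

lemma hasDerivAt_expKernel_succ_succ (s : ℝ) (a b : ℕ) (x : ℝ) :
    HasDerivAt (expKernel s (a + 1) (b + 1)) (expKernel s (a + 1) b x) x :=
  (hasDerivAt_expKernel_succ s a (b + 1) x).congr_deriv <| by
    linear_combination mul_expKernel_succ_succ s a b x

lemma expKernel_one_one {s : ℝ} (hs : s ≠ 0) (x : ℝ) :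
    expKernel s 1 1 x = (exp (s * x) - 1) / s := by
  have h := mul_expKernel_succ_succ s 0 0 x
  simp only [zero_add, expKernel.eq_2, expKernel.eq_3, pow_zero, Nat.factorial_zero, Nat.cast_one,
    div_one, mul_one] at h
  rw [eq_div_iff hs, mul_comm, h]

end ExpKernel

section SumOfProducts

variable (s A : ℝ) (n : ℕ)

lemma mul_sum_antidiagonal_expKernel_cross (x y : ℝ) :
    s * ∑ c ∈ antidiagonal n,
      (expKernel s (c.1 + 1) (c.2 + 1) x * expKernel (-s) (c.1 + 1) c.2 y
        - expKernel s c.1 (c.2 + 1) x * expKernel (-s) (c.1 + 1) (c.2 + 1) y)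
      = (exp (s * (x - y)) - 1) * ((x * y) ^ n / (n ! : ℝ) ^ 2) := by
  have htele := sum_antidiagonal_succ_left_sub_succ_right
    (fun a b => expKernel s a b x * expKernel (-s) a b y) n
  calc
    _ = expKernel s (n + 1) 0 x * expKernel (-s) (n + 1) 0 y
        - expKernel s 0 (n + 1) x * expKernel (-s) 0 (n + 1) y := by
      rw [← htele, Finset.mul_sum]
      refine Finset.sum_congr rfl fun c _ => ?_
      linear_combination expKernel (-s) (c.1 + 1) c.2 y * mul_expKernel_succ_succ s c.1 c.2 x
        + expKernel s c.1 (c.2 + 1) x * mul_expKernel_succ_succ (-s) c.1 c.2 y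
    _ = _ := by
      have hexp : exp (s * (x - y)) = exp (s * x) * exp (-s * y) := by
        rw [← exp_add]; ring_nf
      simp only [expKernel, hexp]
      field_simp
      ring

lemma hasDerivAt_exp_mul_sum_antidiagonal_expKernel (t : ℝ) :
    HasDerivAt (fun t => s * (exp (s * t) * ∑ c ∈ antidiagonal n,
        expKernel s (c.1 + 1) (c.2 + 1) (A - t) * expKernel (-s) (c.1 + 1) (c.2 + 1) (A + t)))
      (-(2 / (n ! : ℝ) ^ 2 * (sinh (s * t) * (A ^ 2 - t ^ 2) ^ n))) t := by
  have hsum := HasDerivAt.fun_sum fun c (_ : c ∈ antidiagonal n) =>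
    ((hasDerivAt_expKernel_succ s c.1 (c.2 + 1) (A - t)).comp_const_sub A t).fun_mul
      ((hasDerivAt_expKernel_succ_succ (-s) c.1 c.2 (A + t)).comp_const_add A t)
  refine (((hasDerivAt_exp_const_mul s t).mul hsum).const_mul s).congr_deriv ?_
  have hcross := mul_sum_antidiagonal_expKernel_cross s n (A - t) (A + t)
  calc
    _ = exp (s * t) * (s * ∑ c ∈ antidiagonal n,
        (expKernel s (c.1 + 1) (c.2 + 1) (A - t) * expKernel (-s) (c.1 + 1) c.2 (A + t)
        - expKernel s c.1 (c.2 + 1) (A - t) * expKernel (-s) (c.1 + 1) (c.2 + 1) (A + t))) := by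
      simp only [Finset.mul_sum, ← Finset.sum_add_distrib]
      exact Finset.sum_congr rfl fun c _ => by ring
    _ = (exp (s * t) * exp (s * (A - t - (A + t))) - exp (s * t))
        * (((A - t) * (A + t)) ^ n / (n ! : ℝ) ^ 2) := by rw [hcross]; ring
    _ = _ := by
      rw [← exp_add, show s * t + s * (A - t - (A + t)) = -(s * t) by ring,
        show (A - t) * (A + t) = A ^ 2 - t ^ 2 by ring, sinh_eq]
      ring

lemma mul_sum_antidiagonal_expKernel_eq_integral_sinh :
    s * ∑ c ∈ antidiagonal n,
        expKernel s (c.1 + 1) (c.2 + 1) A * expKernel (-s) (c.1 + 1) (c.2 + 1) A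
      = 2 / (n ! : ℝ) ^ 2 * ∫ t in 0..A, sinh (s * t) * (A ^ 2 - t ^ 2) ^ n := by
  have hFTC := intervalIntegral.integral_eq_sub_of_hasDerivAt (a := 0) (b := A)
    (fun t _ => hasDerivAt_exp_mul_sum_antidiagonal_expKernel s A n t)
    (Continuous.intervalIntegrable (by fun_prop) _ _)
  simp only [intervalIntegral.integral_neg, intervalIntegral.integral_const_mul, sub_self, sub_zero,
    add_zero, mul_zero, exp_zero, one_mul, expKernel_apply_zero] at hFTC
  simpa [show ∀ a b : ℕ, a + 1 + (b + 1) ≠ 1 by lia] using hFTC.symm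

end SumOfProducts

section SinhSeries

lemma integral_odd_pow_mul_sq_sub_sq_pow (A : ℝ) (n p : ℕ) :
    ∫ t in 0..A, t ^ (2 * p + 1) * (A ^ 2 - t ^ 2) ^ n
      = (p ! : ℝ) * n ! / (2 * (p + 1 + n)!) * A ^ (2 * (p + 1 + n)) := by
  induction n generalizing p with
  | zero =>
    simp only [pow_zero, mul_one, integral_pow, add_zero, Nat.factorial_succ]
    push_cast
    field_simp
    simp only [zero_pow (Nat.succ_ne_zero _), sub_zero, Nat.factorial_zero, Nat.cast_one]
    ring
  | succ n ih =>
    have hderiv (t : ℝ) : HasDerivAt (fun t : ℝ => t ^ (2 * p + 2) * (A ^ 2 - t ^ 2) ^ (n + 1))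
        ((2 * p + 2) * (t ^ (2 * p + 1) * (A ^ 2 - t ^ 2) ^ (n + 1))
          - (2 * n + 2) * (t ^ (2 * (p + 1) + 1) * (A ^ 2 - t ^ 2) ^ n)) t := by
      refine ((hasDerivAt_pow (2 * p + 2) t).mul
        (((hasDerivAt_pow 2 t).const_sub (A ^ 2)).pow (n + 1))).congr_deriv ?_
      simp only [Pi.pow_apply, Nat.add_one_sub_one]
      push_cast
      ring
    have hparts := intervalIntegral.integral_eq_sub_of_hasDerivAt (a := 0) (b := A)
      (fun t _ => hderiv t) (Continuous.intervalIntegrable (by fun_prop) _ _)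
    rw [intervalIntegral.integral_sub (Continuous.intervalIntegrable (by fun_prop) _ _)
      (Continuous.intervalIntegrable (by fun_prop) _ _), intervalIntegral.integral_const_mul,
      intervalIntegral.integral_const_mul, ih (p + 1)] at hparts
    have hp : (2 * p + 2 : ℝ) ≠ 0 := by positivity
    apply mul_left_cancel₀ hp
    rw [show p + 1 + (n + 1) = p + 1 + 1 + n by ring]
    simp only [Nat.factorial_succ p, Nat.factorial_succ n] at hparts ⊢
    simp only [sub_self, zero_pow (Nat.succ_ne_zero _), mul_zero, zero_mul, sub_zero] at hparts
    push_cast at hparts ⊢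
    linear_combination hparts

lemma hasSum_integral_sinh_mul (s a b : ℝ) {g : ℝ → ℝ} (hg : Continuous g) :
    HasSum (fun p : ℕ => s ^ (2 * p + 1) / (2 * p + 1)! * ∫ t in a..b, t ^ (2 * p + 1) * g t)
      (∫ t in a..b, sinh (s * t) * g t) := by
  have hterm (t : ℝ) :
      HasSum (fun p : ℕ => s ^ (2 * p + 1) / (2 * p + 1)! * (t ^ (2 * p + 1) * g t))
        (sinh (s * t) * g t) := by
    refine ((hasSum_sinh (s * t)).mul_right (g t)).congr_fun fun p => ?_
    rw [mul_pow]
    ring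
  have hnorm (t : ℝ) :
      HasSum (fun p : ℕ => ‖s ^ (2 * p + 1) / (2 * p + 1)! * (t ^ (2 * p + 1) * g t)‖)
        (sinh |s * t| * |g t|) := by
    refine ((hasSum_sinh |s * t|).mul_right |g t|).congr_fun fun p => ?_
    simp only [norm_eq_abs, abs_mul, abs_div, abs_pow, Nat.abs_cast, mul_pow]
    ring
  simp only [← intervalIntegral.integral_const_mul]
  refine intervalIntegral.hasSum_integral_of_dominated_convergence
    (fun p t => ‖s ^ (2 * p + 1) / (2 * p + 1)! * (t ^ (2 * p + 1) * g t)‖)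
    (fun p => Continuous.aestronglyMeasurable (by fun_prop))
    (fun p => .of_forall fun t _ => le_rfl) (.of_forall fun t _ => (hnorm t).summable) ?_
    (.of_forall fun t _ => hterm t)
  simp only [(hnorm _).tsum_eq]
  exact Continuous.intervalIntegrable (by fun_prop) _ _

lemma hasSum_sum_antidiagonal_expKernel {s : ℝ} (hs : s ≠ 0) (A : ℝ) (n : ℕ) :
    HasSum (fun p : ℕ => s ^ (2 * p) * p ! * A ^ (2 * (p + 1 + n))
        / ((2 * p + 1)! * (p + 1 + n)! * n !))
      (∑ c ∈ antidiagonal n,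
        expKernel s (c.1 + 1) (c.2 + 1) A * expKernel (-s) (c.1 + 1) (c.2 + 1) A) := by
  have hseries := (hasSum_integral_sinh_mul s 0 A
    (g := fun t => (A ^ 2 - t ^ 2) ^ n) (by fun_prop)).mul_left (2 / (n ! : ℝ) ^ 2)
  rw [← mul_sum_antidiagonal_expKernel_eq_integral_sinh] at hseries
  refine (hasSum_mul_left_iff hs).1 (hseries.congr_fun fun p => ?_)
  rw [integral_odd_pow_mul_sq_sub_sq_pow]
  field_simp
  ring

end SinhSeries

section IteratedLConvolution

variable {G : Type*} [MeasurableSpace G] [AddCommGroup G] [MeasurableAdd₂ G] [MeasurableNeg G]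
  {μ : Measure G}

lemma smul_lconvolution (c : ℝ≥0∞) {f g : G → ℝ≥0∞} (hf : Measurable f) (hg : Measurable g) :
    (c • f) ⋆ₗ[μ] g = c • (f ⋆ₗ[μ] g) := by
  ext x
  simp only [lconvolution_def, Pi.smul_apply, smul_eq_mul, mul_assoc]
  exact lintegral_const_mul _ (by fun_prop)

lemma lconvolution_smul (c : ℝ≥0∞) {f g : G → ℝ≥0∞} (hf : Measurable f) (hg : Measurable g) :
    f ⋆ₗ[μ] (c • g) = c • (f ⋆ₗ[μ] g) := by
  ext x
  simp only [lconvolution_def, Pi.smul_apply, smul_eq_mul, mul_left_comm _ c]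
  exact lintegral_const_mul _ (by fun_prop)

lemma lconvolution_left_comm [SFinite μ] [μ.IsAddLeftInvariant] [μ.IsNegInvariant]
    {f g k : G → ℝ≥0∞} (hf : Measurable f) (hg : Measurable g) (hk : Measurable k) :
    f ⋆ₗ[μ] (g ⋆ₗ[μ] k) = g ⋆ₗ[μ] (f ⋆ₗ[μ] k) := by
  rw [lconvolution_assoc hf hg hk, lconvolution_comm (f := f), ← lconvolution_assoc hg hf hk]

variable (μ) in
/-- The convolution `F 0 ⋆ F 1 ⋆ ⋯ ⋆ F n` of the first `n + 1` functions of a sequence. -/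
noncomputable def iteratedLConvolution : ℕ → (ℕ → G → ℝ≥0∞) → G → ℝ≥0∞
  | 0, F => F 0
  | n + 1, F => F 0 ⋆ₗ[μ] iteratedLConvolution n fun i => F (i + 1)

lemma measurable_iteratedLConvolution [SFinite μ] (n : ℕ) {F : ℕ → G → ℝ≥0∞}
    (hF : ∀ i, Measurable (F i)) : Measurable (iteratedLConvolution μ n F) := by
  induction n generalizing F with
  | zero => exact hF 0
  | succ n ih => exact measurable_lconvolution _ (hF 0) (ih fun i => hF (i + 1))

lemma lintegral_prod_mul_eq_iteratedLConvolution [SigmaFinite μ] (n : ℕ) {F : ℕ → G → ℝ≥0∞}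
    (hF : ∀ i, Measurable (F i)) (x : G) :
    ∫⁻ v : Fin n → G, (∏ i : Fin n, F i (v i)) * F n (x - ∑ i, v i) ∂Measure.pi (fun _ => μ)
      = iteratedLConvolution μ n F x := by
  induction n generalizing F x with
  | zero => simp [iteratedLConvolution]
  | succ n ih =>
    rw [← (measurePreserving_piFinSuccAbove (fun _ => μ) 0).symm.lintegral_comp (by fun_prop),
      lintegral_prod _ (by fun_prop)]
    refine lintegral_congr fun y => ?_
    rw [← ih fun i => hF (i + 1), ← lintegral_const_mul _ (by fun_prop)]
    refine lintegral_congr fun w => ?_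
    simp [MeasurableEquiv.piFinSuccAbove, Fin.prod_univ_succ, Fin.sum_univ_succ, mul_assoc,
      ← sub_sub, sub_eq_neg_add x y]

lemma lconvolution_iteratedLConvolution_update [SFinite μ] [μ.IsAddLeftInvariant]
    [μ.IsNegInvariant] {f g k : G → ℝ≥0∞} (hf : Measurable f) (hg : Measurable g)
    (hk : Measurable k) {F : ℕ → G → ℝ≥0∞} (hF : ∀ i, Measurable (F i)) {c : ℝ≥0∞} {m n : ℕ}
    (hmn : m ≤ n) (h : f ⋆ₗ[μ] g = c • (k ⋆ₗ[μ] F m)) :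
    f ⋆ₗ[μ] iteratedLConvolution μ n (Function.update F m g)
      = c • (k ⋆ₗ[μ] iteratedLConvolution μ n F) := by
  induction n generalizing F m with
  | zero =>
    obtain rfl : m = 0 := by lia
    simpa [iteratedLConvolution] using h
  | succ n ih =>
    have hF' (i : ℕ) : Measurable (F (i + 1)) := hF (i + 1)
    have htail := measurable_iteratedLConvolution (μ := μ) n hF'
    rcases m with _ | m
    · have hupdate : (fun i => Function.update F 0 g (i + 1)) = fun i => F (i + 1) := by
        simp
      rw [iteratedLConvolution, iteratedLConvolution, hupdate, Function.update_self,
        lconvolution_assoc hf hg htail, h, smul_lconvolution c (by fun_prop) htail,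
        lconvolution_assoc hk (hF 0) htail]
    · have hupdate : (fun i => Function.update F (m + 1) g (i + 1))
          = Function.update (fun i => F (i + 1)) m g := by
        ext i
        simp [Function.update_apply]
      have hmeas : Measurable
          (iteratedLConvolution μ n (Function.update (fun i => F (i + 1)) m g)) :=
        measurable_iteratedLConvolution n <| (Function.forall_update_iff _ fun _ => Measurable).2
          ⟨hg, fun i _ => hF' i⟩
      rw [iteratedLConvolution, iteratedLConvolution, hupdate,
        Function.update_of_ne (Nat.succ_ne_zero m).symm, lconvolution_left_comm hf (hF 0) hmeas,
        ih hF' (by lia) h, lconvolution_smul c (hF 0) (by fun_prop),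
        lconvolution_left_comm (hF 0) hk htail]

end IteratedLConvolution

section HalfLine

/-- The extension by zero of `h` from the open positive half-line, as a nonnegative extended-real
function; negative values of `h` are truncated to `0`. -/
noncomputable def halfLine (h : ℝ → ℝ) : ℝ → ℝ≥0∞ :=
  (Set.Ioi 0).indicator fun x => ENNReal.ofReal (h x)

lemma halfLine_of_pos (h : ℝ → ℝ) {x : ℝ} (hx : 0 < x) : halfLine h x = ENNReal.ofReal (h x) :=
  Set.indicator_of_mem hx _

lemma halfLine_of_nonpos (h : ℝ → ℝ) {x : ℝ} (hx : x ≤ 0) : halfLine h x = 0 :=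
  Set.indicator_of_notMem (Set.notMem_Ioi.2 hx) _

lemma measurable_halfLine {h : ℝ → ℝ} (hh : Measurable h) : Measurable (halfLine h) :=
  hh.ennreal_ofReal.indicator measurableSet_Ioi

lemma halfLine_lconvolution_halfLine (g h : ℝ → ℝ) (x : ℝ) :
    (halfLine g ⋆ₗ halfLine h) x
      = ∫⁻ t in Set.Ioo 0 x, ENNReal.ofReal (g t) * ENNReal.ofReal (h (x - t)) := by
  rw [lconvolution_def, ← lintegral_indicator measurableSet_Ioo]
  refine lintegral_congr fun t => ?_
  by_cases h0 : 0 < t <;> by_cases hx : t < x <;>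
    simp [halfLine, Set.indicator, h0, hx, sub_eq_neg_add]

lemma halfLine_lconvolution_halfLine_of_nonpos (g h : ℝ → ℝ) {x : ℝ} (hx : x ≤ 0) :
    (halfLine g ⋆ₗ halfLine h) x = 0 := by
  rw [halfLine_lconvolution_halfLine, Set.Ioo_eq_empty hx.not_gt, setLIntegral_empty]

lemma setLIntegral_Ioo_ofReal {f : ℝ → ℝ} {a b : ℝ} (hab : a ≤ b)
    (hcont : ContinuousOn f (Set.Icc a b)) (hnonneg : ∀ t ∈ Set.Ioo a b, 0 ≤ f t) :
    ∫⁻ t in Set.Ioo a b, ENNReal.ofReal (f t) = ENNReal.ofReal (∫ t in a..b, f t) := by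
  rw [intervalIntegral.integral_of_le hab, integral_Ioc_eq_integral_Ioo,
    ofReal_integral_eq_lintegral_ofReal]
  · exact hcont.integrableOn_Icc.mono_set Set.Ioo_subset_Icc_self
  · exact (ae_restrict_iff' measurableSet_Ioo).2 (.of_forall hnonneg)

/-- The open simplex of positive `n`-tuples with sum less than `A`. -/
def openSimplex (n : ℕ) (A : ℝ) : Set (Fin n → ℝ) := {v | (∀ i, 0 < v i) ∧ ∑ i, v i < A}

lemma mem_openSimplex {n : ℕ} {A : ℝ} {v : Fin n → ℝ} :
    v ∈ openSimplex n A ↔ (∀ i, 0 < v i) ∧ ∑ i, v i < A :=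
  Iff.rfl

lemma measurableSet_openSimplex (n : ℕ) (A : ℝ) : MeasurableSet (openSimplex n A) := by
  unfold openSimplex
  measurability

lemma indicator_openSimplex_ofReal_prod {n : ℕ} {g : ℕ → ℝ → ℝ}
    (hg : ∀ i x, 0 < x → 0 ≤ g i x) (A : ℝ) (v : Fin n → ℝ) :
    (openSimplex n A).indicator
        (fun v => ENNReal.ofReal ((∏ i : Fin n, g i (v i)) * g n (A - ∑ i, v i))) v
      = (∏ i : Fin n, halfLine (g i) (v i)) * halfLine (g n) (A - ∑ i, v i) := by
  by_cases hpos : ∀ i, 0 < v i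
  · have hprod : ENNReal.ofReal (∏ i : Fin n, g i (v i)) = ∏ i : Fin n, halfLine (g i) (v i) := by
      rw [ENNReal.ofReal_prod_of_nonneg fun (i : Fin n) _ => hg i _ (hpos i)]
      exact Finset.prod_congr rfl fun i _ => (halfLine_of_pos _ (hpos i)).symm
    by_cases hsum : ∑ i, v i < A
    · rw [Set.indicator_of_mem (mem_openSimplex.2 ⟨hpos, hsum⟩),
        halfLine_of_pos _ (sub_pos.2 hsum), ← hprod,
        ENNReal.ofReal_mul (Finset.prod_nonneg fun (i : Fin n) _ => hg i _ (hpos i))]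
    · rw [Set.indicator_of_notMem fun h => hsum h.2,
        halfLine_of_nonpos _ (sub_nonpos.2 (not_lt.1 hsum)), mul_zero]
  · rw [Set.indicator_of_notMem fun h => hpos h.1]
    push Not at hpos
    obtain ⟨i, hi⟩ := hpos
    rw [Finset.prod_eq_zero (Finset.mem_univ i) (halfLine_of_nonpos _ hi), zero_mul]

lemma integral_openSimplex_prod_eq_toReal {n : ℕ} {g : ℕ → ℝ → ℝ} (hmeas : ∀ i, Measurable (g i))
    (hg : ∀ i x, 0 < x → 0 ≤ g i x) (A : ℝ) :
    ∫ v in openSimplex n A,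
        (∏ i : Fin n, g i (v i)) * g n (A - ∑ i, v i)
      = (iteratedLConvolution volume n (fun i => halfLine (g i)) A).toReal := by
  have hS := measurableSet_openSimplex n A
  rw [integral_eq_lintegral_of_nonneg_ae, ← lintegral_indicator hS,
    ← lintegral_prod_mul_eq_iteratedLConvolution n fun i => measurable_halfLine (hmeas i)]
  · simp only [indicator_openSimplex_ofReal_prod hg]
    rfl
  · exact (ae_restrict_iff' hS).2 <| .of_forall fun v hv =>
      mul_nonneg (Finset.prod_nonneg fun i _ => hg i _ (hv.1 i)) (hg n _ (sub_pos.2 hv.2))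
  · exact Measurable.aestronglyMeasurable (by fun_prop)

end HalfLine

section ExpHalfLine

/-- The function `x ↦ exp (s * x)` on the positive half-line. -/
noncomputable def expHalfLine (s : ℝ) : ℝ → ℝ≥0∞ := halfLine fun x => exp (s * x)

lemma measurable_expHalfLine (s : ℝ) : Measurable (expHalfLine s) :=
  measurable_halfLine (by fun_prop)

lemma expHalfLine_lconvolution_halfLine (s : ℝ) {h : ℝ → ℝ} (hcont : Continuous h)
    (hnonneg : ∀ x, 0 ≤ x → 0 ≤ h x) :
    expHalfLine s ⋆ₗ halfLine h = halfLine (expPrimitive s h) := by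
  rw [lconvolution_comm, expHalfLine]
  ext x
  rcases le_or_gt x 0 with hx | hx
  · rw [halfLine_of_nonpos _ hx, halfLine_lconvolution_halfLine_of_nonpos _ _ hx]
  rw [halfLine_of_pos _ hx, halfLine_lconvolution_halfLine, expPrimitive,
    ← intervalIntegral.integral_const_mul, ← setLIntegral_Ioo_ofReal hx.le (by fun_prop)]
  · refine setLIntegral_congr_fun measurableSet_Ioo fun t ht => ?_
    rw [← ENNReal.ofReal_mul (hnonneg t ht.1.le), ← mul_assoc, ← exp_add, mul_comm]
    ring_nf
  · intro t ht
    have := hnonneg t ht.1.le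
    positivity

/-- The sequence `e, …, e, 1, 1, …` of functions on the positive half-line, with `a` copies of
`e = expHalfLine s`. -/
noncomputable def expFactors (s : ℝ) (a i : ℕ) : ℝ → ℝ≥0∞ := expHalfLine (if i < a then s else 0)

lemma measurable_expFactors (s : ℝ) (a i : ℕ) : Measurable (expFactors s a i) :=
  measurable_expHalfLine _

lemma expFactors_zero_succ (s : ℝ) (i : ℕ) : expFactors s 0 (i + 1) = expFactors s 0 i := by
  simp [expFactors]

lemma expFactors_succ_succ (s : ℝ) (a i : ℕ) :
    expFactors s (a + 1) (i + 1) = expFactors s a i := by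
  simp [expFactors]

lemma iteratedLConvolution_expFactors (s : ℝ) (a b : ℕ) :
    iteratedLConvolution volume (b + a) (expFactors s a) = halfLine (expKernel s a (b + 1)) := by
  have hconv (r : ℝ) (a b : ℕ) := expHalfLine_lconvolution_halfLine r (continuous_expKernel s a b)
    fun x hx => expKernel_nonneg s a b hx
  induction a with
  | zero =>
    induction b with
    | zero => ext x; simp [iteratedLConvolution, expFactors, expHalfLine, expKernel]
    | succ b ih =>
      simp only [add_zero] at ih
      simp only [iteratedLConvolution, expFactors_zero_succ, ih]
      rw [expFactors, if_neg (lt_irrefl 0), hconv 0 0 (b + 1)]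
      exact congrArg halfLine (expPrimitive_zero_pow_div_factorial b)
  | succ a ih =>
    rw [← add_assoc, iteratedLConvolution]
    simp only [expFactors_succ_succ, ih]
    rw [expFactors, if_pos a.succ_pos, hconv s a (b + 1), expKernel]

lemma toReal_halfLine_expKernel (s : ℝ) (a b : ℕ) {x : ℝ} (hx : 0 ≤ x) :
    (halfLine (expKernel s (a + 1) (b + 1)) x).toReal = expKernel s (a + 1) (b + 1) x := by
  rcases hx.eq_or_lt with rfl | hx
  · simp [halfLine_of_nonpos _ le_rfl, expKernel_apply_zero, show a + 1 + (b + 1) ≠ 1 by lia]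
  · rw [halfLine_of_pos _ hx, ENNReal.toReal_ofReal (expKernel_nonneg s _ _ hx.le)]

end ExpHalfLine

section BetaIntegral

lemma lintegral_rpow_mul_exp_neg_mul_Ioi {a r : ℝ} (ha : 0 < a) (hr : 0 < r) :
    ∫⁻ t in Set.Ioi (0 : ℝ), ENNReal.ofReal (t ^ (a - 1) * exp (-(r * t)))
      = ENNReal.ofReal ((1 / r) ^ a * Gamma a) := by
  rw [← integral_rpow_mul_exp_neg_mul_Ioi ha hr, ofReal_integral_eq_lintegral_ofReal]
  · simpa [IntegrableOn] using
      integrableOn_rpow_mul_exp_neg_mul_rpow (s := a - 1) (by linarith) one_pos hr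
  · refine (ae_restrict_iff' measurableSet_Ioi).2 (.of_forall fun t ht => ?_)
    exact mul_nonneg (rpow_nonneg (le_of_lt ht) _) (exp_pos _).le

lemma lintegral_mul_exp_neg_mul_Ioi {r : ℝ} (hr : 0 < r) :
    ∫⁻ t in Set.Ioi (0 : ℝ), ENNReal.ofReal (t * exp (-(r * t)))
      = ENNReal.ofReal ((1 / r) ^ 2) := by
  have h := lintegral_rpow_mul_exp_neg_mul_Ioi two_pos hr
  simpa [show (2 : ℝ) - 1 = 1 by norm_num] using h

lemma lintegral_rpow_mul_mul_exp_neg_Ioi {s θ t : ℝ} (hs : -1 < s) (hθ : 0 < θ) (ht : 0 < t) :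
    ∫⁻ y in Set.Ioi (0 : ℝ), ENNReal.ofReal (y ^ s * (t * exp (-((1 + θ * y) * t))))
      = ENNReal.ofReal (Gamma (1 + s) * θ ^ (-1 - s))
        * ENNReal.ofReal (t ^ ((1 - s) - 1) * exp (-(1 * t))) := by
  have hGamma : 0 < Gamma (1 + s) := Gamma_pos_of_pos (by linarith)
  have hsplit (y : ℝ) : ENNReal.ofReal (y ^ s * (t * exp (-((1 + θ * y) * t))))
      = ENNReal.ofReal (t * exp (-t))
        * ENNReal.ofReal (y ^ (1 + s - 1) * exp (-(θ * t * y))) := by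
    rw [← ENNReal.ofReal_mul (by positivity), add_sub_cancel_left,
      show -((1 + θ * y) * t) = -t + -(θ * t * y) by ring, exp_add]
    ring_nf
  simp only [hsplit]
  rw [lintegral_const_mul _ (by fun_prop),
    lintegral_rpow_mul_exp_neg_mul_Ioi (by linarith) (by positivity),
    ← ENNReal.ofReal_mul (by positivity), ← ENNReal.ofReal_mul (by positivity), one_div,
    inv_rpow (by positivity), ← rpow_neg (by positivity), mul_rpow hθ.le ht.le,
    show 1 - s - 1 = 1 + -(1 + s) by ring, rpow_add ht, rpow_one, neg_add']
  ring_nf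

lemma lintegral_rpow_mul_one_div_one_add_mul_sq {s θ : ℝ} (hs : |s| < 1) (hθ : 0 < θ) :
    ∫⁻ y in Set.Ioi (0 : ℝ), ENNReal.ofReal (y ^ s * (1 / (1 + θ * y)) ^ 2)
      = ENNReal.ofReal (Gamma (1 + s) * Gamma (1 - s)) * ENNReal.ofReal (θ ^ (-1 - s)) := by
  obtain ⟨hs1, hs2⟩ := abs_lt.1 hs
  have hGamma : 0 < Gamma (1 + s) := Gamma_pos_of_pos (by linarith)
  have hLaplace (y : ℝ) (hy : y ∈ Set.Ioi (0 : ℝ)) :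
      ENNReal.ofReal (y ^ s * (1 / (1 + θ * y)) ^ 2)
        = ∫⁻ t in Set.Ioi (0 : ℝ), ENNReal.ofReal (y ^ s * (t * exp (-((1 + θ * y) * t)))) := by
    have hy : 0 < y := hy
    have hys : 0 ≤ y ^ s := by positivity
    simp only [ENNReal.ofReal_mul hys]
    rw [lintegral_const_mul _ (by fun_prop), lintegral_mul_exp_neg_mul_Ioi (by positivity)]
  rw [setLIntegral_congr_fun measurableSet_Ioi hLaplace, lintegral_lintegral_swap (by fun_prop),
    setLIntegral_congr_fun measurableSet_Ioi fun t ht =>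
      lintegral_rpow_mul_mul_exp_neg_Ioi hs1 hθ ht,
    lintegral_const_mul _ (by fun_prop),
    lintegral_rpow_mul_exp_neg_mul_Ioi (by linarith) one_pos, ← ENNReal.ofReal_mul (by positivity),
    ← ENNReal.ofReal_mul (mul_nonneg hGamma.le (Gamma_pos_of_pos (by linarith)).le)]
  simp [mul_right_comm]

lemma Gamma_one_add_mul_Gamma_one_sub {s : ℝ} (hs : s ≠ 0) :
    Gamma (1 + s) * Gamma (1 - s) = π * s / sin (π * s) := by
  rw [add_comm, Gamma_add_one hs, mul_assoc, Gamma_mul_Gamma_one_sub]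
  ring

lemma pi_mul_div_sin_pi_mul_nonneg {s : ℝ} (hs0 : s ≠ 0) (hs : |s| < 1) :
    0 ≤ π * s / sin (π * s) := by
  obtain ⟨hs1, hs2⟩ := abs_lt.1 hs
  rw [← Gamma_one_add_mul_Gamma_one_sub hs0]
  exact mul_nonneg (Gamma_pos_of_pos (by linarith)).le (Gamma_pos_of_pos (by linarith)).le

lemma lintegral_Ioo_rpow_neg_one_sub {s q : ℝ} (hs : s ≠ 0) (hq : 0 < q) (hq1 : q ≤ 1) :
    ∫⁻ θ in Set.Ioo q 1, ENNReal.ofReal (θ ^ (-1 - s)) = ENNReal.ofReal ((q ^ (-s) - 1) / s) := by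
  have h0 : (0 : ℝ) ∉ Set.uIcc q 1 := Set.notMem_uIcc_of_lt hq one_pos
  rw [setLIntegral_Ioo_ofReal hq1, integral_rpow (.inr ⟨fun h => hs (by linarith), h0⟩),
    show -1 - s + 1 = -s by ring, one_rpow, div_neg, ← neg_div, neg_sub]
  · exact continuousOn_id.rpow_const fun θ hθ => .inl (hq.trans_le hθ.1).ne'
  · exact fun θ hθ => rpow_nonneg (hq.trans hθ.1).le _

lemma lintegral_Ioo_one_div_one_add_mul_sq {y q : ℝ} (hy : 0 < y) (hq : 0 < q) (hq1 : q ≤ 1) :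
    ∫⁻ θ in Set.Ioo q 1, ENNReal.ofReal ((1 / (1 + θ * y)) ^ 2)
      = ENNReal.ofReal ((1 - q) / ((1 + y) * (1 + q * y))) := by
  have hne : ∀ θ ∈ Set.Icc q 1, 1 + θ * y ≠ 0 := fun θ hθ => by
    have := hq.trans_le hθ.1
    positivity
  have hcont : ContinuousOn (fun θ => (1 / (1 + θ * y)) ^ 2) (Set.Icc q 1) :=
    (continuousOn_const.div (by fun_prop) hne).pow 2
  have hderiv : ∀ θ ∈ Set.uIcc q 1,
      HasDerivAt (fun θ => -(1 / y) * (1 + θ * y)⁻¹) ((1 / (1 + θ * y)) ^ 2) θ := fun θ hθ => by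
    have hθ := hne θ (Set.uIcc_of_le hq1 ▸ hθ)
    refine (((((hasDerivAt_id θ).mul_const y).const_add 1).inv hθ).const_mul _).congr_deriv ?_
    field_simp
    simp
  have hint := intervalIntegral.integral_eq_sub_of_hasDerivAt hderiv
    (ContinuousOn.intervalIntegrable (by rwa [Set.uIcc_of_le hq1]))
  rw [setLIntegral_Ioo_ofReal hq1 hcont fun θ _ => sq_nonneg _, hint]
  congr 1
  field_simp
  ring

lemma lintegral_rpow_mul_inv_one_add_mul_inv_one_add_mul {s q : ℝ} (hs0 : s ≠ 0) (hs : |s| < 1)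
    (hq : 0 < q) (hq1 : q ≤ 1) :
    ∫⁻ y in Set.Ioi (0 : ℝ),
        ENNReal.ofReal (y ^ s) * ENNReal.ofReal ((1 - q) / ((1 + y) * (1 + q * y)))
      = ENNReal.ofReal (π * s / sin (π * s)) * ENNReal.ofReal ((q ^ (-s) - 1) / s) := by
  have hθ (y : ℝ) (hy : y ∈ Set.Ioi (0 : ℝ)) :
      ENNReal.ofReal (y ^ s) * ENNReal.ofReal ((1 - q) / ((1 + y) * (1 + q * y)))
        = ∫⁻ θ in Set.Ioo q 1, ENNReal.ofReal (y ^ s * (1 / (1 + θ * y)) ^ 2) := by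
    have hys : 0 ≤ y ^ s := rpow_nonneg (le_of_lt hy) s
    simp only [ENNReal.ofReal_mul hys]
    rw [lintegral_const_mul _ (by fun_prop), lintegral_Ioo_one_div_one_add_mul_sq hy hq hq1]
  rw [setLIntegral_congr_fun measurableSet_Ioi hθ, lintegral_lintegral_swap (by fun_prop),
    setLIntegral_congr_fun measurableSet_Ioo fun θ hθ =>
      lintegral_rpow_mul_one_div_one_add_mul_sq hs (hq.trans hθ.1),
    lintegral_const_mul _ (by fun_prop), lintegral_Ioo_rpow_neg_one_sub hs0 hq hq1,
    Gamma_one_add_mul_Gamma_one_sub hs0]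

end BetaIntegral

section ChangeOfVariables

lemma one_sub_exp_neg_pos {x : ℝ} (hx : 0 < x) : 0 < 1 - exp (-x) :=
  sub_pos.2 (exp_lt_one_iff.2 (neg_neg_of_pos hx))

/-- The substitution `w = log ((1 + y) / (1 + q y))` with `q = exp (-A)`, which maps the positive
half-line onto the interval `(0, A)`. -/
noncomputable def logRatio (A y : ℝ) : ℝ := log ((1 + y) / (1 + exp (-A) * y))

lemma exp_logRatio (A : ℝ) {y : ℝ} (hy : 0 < y) :
    exp (logRatio A y) = (1 + y) / (1 + exp (-A) * y) :=
  exp_log (by positivity)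

lemma exp_neg_sub_logRatio (A : ℝ) {y : ℝ} (hy : 0 < y) :
    exp (-(A - logRatio A y)) = exp (-A) * ((1 + y) / (1 + exp (-A) * y)) := by
  rw [← exp_logRatio A hy, ← exp_add]
  ring_nf

lemma one_sub_exp_neg_logRatio (A : ℝ) {y : ℝ} (hy : 0 < y) :
    1 - exp (-logRatio A y) = (1 - exp (-A)) * y / (1 + y) := by
  rw [exp_neg (logRatio A y), exp_logRatio A hy]
  field_simp
  ring

lemma one_sub_exp_neg_sub_logRatio (A : ℝ) {y : ℝ} (hy : 0 < y) :
    1 - exp (-(A - logRatio A y)) = (1 - exp (-A)) / (1 + exp (-A) * y) := by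
  rw [exp_neg_sub_logRatio A hy]
  field_simp
  ring

lemma hasDerivAt_logRatio (A : ℝ) {y : ℝ} (hy : 0 < y) :
    HasDerivAt (logRatio A) ((1 - exp (-A)) / ((1 + y) * (1 + exp (-A) * y))) y := by
  have hnum : HasDerivAt (fun y : ℝ => 1 + y) 1 y := (hasDerivAt_id y).const_add 1
  have hden : HasDerivAt (fun y : ℝ => 1 + exp (-A) * y) (exp (-A)) y := by
    simpa using ((hasDerivAt_id y).const_mul (exp (-A))).const_add 1
  refine ((hnum.fun_div hden (by positivity)).log (by positivity)).congr_deriv ?_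
  field_simp
  ring

lemma mapsTo_logRatio {A : ℝ} (hA : 0 < A) :
    Set.MapsTo (logRatio A) (Set.Ioi 0) (Set.Ioo 0 A) := fun y hy => by
  have hy : 0 < y := hy
  have hq := one_sub_exp_neg_pos hA
  have hleft : 0 < 1 - exp (-logRatio A y) := by
    rw [one_sub_exp_neg_logRatio A hy]
    positivity
  have hright : 0 < 1 - exp (-(A - logRatio A y)) := by
    rw [one_sub_exp_neg_sub_logRatio A hy]
    positivity
  exact ⟨by simpa using hleft, by simpa using hright⟩

lemma surjOn_logRatio {A : ℝ} (hA : 0 < A) :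
    Set.SurjOn (logRatio A) (Set.Ioi 0) (Set.Ioo 0 A) := fun w hw => by
  have hq := (one_sub_exp_neg_pos hA).ne'
  have hden : 0 < 1 - exp (-A) * exp w := by
    have h := one_sub_exp_neg_pos (sub_pos.2 hw.2)
    rwa [neg_sub, sub_eq_neg_add w, exp_add] at h
  refine ⟨(exp w - 1) / (1 - exp (-A) * exp w),
    div_pos (sub_pos.2 (one_lt_exp_iff.2 hw.1)) hden, ?_⟩
  have hnum : 1 + (exp w - 1) / (1 - exp (-A) * exp w)
      = exp w * (1 - exp (-A)) / (1 - exp (-A) * exp w) := by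
    rw [eq_div_iff hden.ne', add_mul, div_mul_cancel₀ _ hden.ne']
    ring
  have hdenom : 1 + exp (-A) * ((exp w - 1) / (1 - exp (-A) * exp w))
      = (1 - exp (-A)) / (1 - exp (-A) * exp w) := by
    rw [eq_div_iff hden.ne', add_mul, mul_assoc, div_mul_cancel₀ _ hden.ne']
    ring
  rw [logRatio, hnum, hdenom, div_div_div_cancel_right₀ hden.ne', mul_div_cancel_right₀ _ hq,
    log_exp]

lemma bijOn_logRatio {A : ℝ} (hA : 0 < A) :
    Set.BijOn (logRatio A) (Set.Ioi 0) (Set.Ioo 0 A) := by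
  refine ⟨mapsTo_logRatio hA, fun y hy z hz h => ?_, surjOn_logRatio hA⟩
  have hy : 0 < y := hy
  have hz : 0 < z := hz
  have hmul : (1 - exp (-A)) * y / (1 + y) = (1 - exp (-A)) * z / (1 + z) := by
    rw [← one_sub_exp_neg_logRatio A hy, ← one_sub_exp_neg_logRatio A hz, h]
  rw [mul_div_assoc, mul_div_assoc, mul_right_inj' (one_sub_exp_neg_pos hA).ne',
    div_eq_div_iff (by positivity) (by positivity)] at hmul
  linarith

lemma rpow_mul_exp_mul_rpow_logRatio (s : ℝ) {A y : ℝ} (hA : 0 < A) (hy : 0 < y) :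
    (1 - exp (-logRatio A y)) ^ s
        * (exp (-s * (A - logRatio A y)) * (1 - exp (-(A - logRatio A y))) ^ (-s))
      = exp (-s * A) * y ^ s := by
  have hq := one_sub_exp_neg_pos hA
  have hexp (x : ℝ) : exp (-s * x) = exp (-x) ^ s := by rw [← exp_mul]; ring_nf
  rw [hexp, hexp, one_sub_exp_neg_logRatio A hy, one_sub_exp_neg_sub_logRatio A hy,
    exp_neg_sub_logRatio A hy, rpow_neg (by positivity), ← inv_rpow (by positivity),
    ← mul_rpow (by positivity) (by positivity), ← mul_rpow (by positivity) (by positivity),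
    ← mul_rpow (by positivity) hy.le]
  congr 1
  field_simp

/-- The convolution of these two functions is a Beta integral, and the reflection formula for the
Gamma function evaluates it. -/
lemma halfLine_rpow_lconvolution_halfLine_exp_mul_rpow {s : ℝ} (hs0 : s ≠ 0) (hs : |s| < 1) :
    halfLine (fun w => (1 - exp (-w)) ^ s)
        ⋆ₗ halfLine (fun w => exp (-s * w) * (1 - exp (-w)) ^ (-s))
      = ENNReal.ofReal (π * s / sin (π * s)) • (expHalfLine (-s) ⋆ₗ expHalfLine 0) := by
  have hkernel : expHalfLine (-s) ⋆ₗ expHalfLine 0 = halfLine (expKernel (-s) 1 1) := by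
    simpa [iteratedLConvolution, expFactors] using iteratedLConvolution_expFactors (-s) 1 0
  ext A
  rw [hkernel, Pi.smul_apply, smul_eq_mul]
  rcases le_or_gt A 0 with hA | hA
  · rw [halfLine_lconvolution_halfLine_of_nonpos _ _ hA, halfLine_of_nonpos _ hA, mul_zero]
  have hq := one_sub_exp_neg_pos hA
  rw [halfLine_lconvolution_halfLine, halfLine_of_pos _ hA, ← (bijOn_logRatio hA).image_eq,
    lintegral_image_eq_lintegral_abs_deriv_mul measurableSet_Ioi
      (fun y hy => (hasDerivAt_logRatio A hy).hasDerivWithinAt) (bijOn_logRatio hA).injOn]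
  have hintegrand : ∀ y ∈ Set.Ioi (0 : ℝ),
      ENNReal.ofReal |(1 - exp (-A)) / ((1 + y) * (1 + exp (-A) * y))|
          * (ENNReal.ofReal ((1 - exp (-logRatio A y)) ^ s)
            * ENNReal.ofReal (exp (-s * (A - logRatio A y))
              * (1 - exp (-(A - logRatio A y))) ^ (-s)))
        = ENNReal.ofReal (exp (-s * A)) * (ENNReal.ofReal (y ^ s)
          * ENNReal.ofReal ((1 - exp (-A)) / ((1 + y) * (1 + exp (-A) * y)))) := fun y hy => by
    have hy : 0 < y := hy
    have hw := one_sub_exp_neg_pos ((bijOn_logRatio hA).mapsTo hy).1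
    rw [abs_of_pos (by positivity), ← ENNReal.ofReal_mul (by positivity),
      rpow_mul_exp_mul_rpow_logRatio s hA hy, ENNReal.ofReal_mul (by positivity)]
    ring
  rw [setLIntegral_congr_fun measurableSet_Ioi hintegrand, lintegral_const_mul _ (by fun_prop),
    lintegral_rpow_mul_inv_one_add_mul_inv_one_add_mul hs0 hs (exp_pos _) (sub_pos.1 hq).le,
    mul_left_comm, ← ENNReal.ofReal_mul (by positivity), expKernel_one_one (neg_ne_zero.2 hs0),
    ← exp_mul]
  congr 2
  have hexp : exp (-s * A) * exp (-A * -s) = 1 := by rw [← exp_add]; simp [mul_comm]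
  rw [div_neg, ← neg_div, ← mul_div_assoc, mul_sub, hexp]
  ring

end ChangeOfVariables

section SimplexIntegrals

lemma Ikl_add_two_add_two (a b : ℕ) (u : ℝ) {L : ℝ} (hL : 0 ≤ L) :
    Ikl (b + a + 2) (a + 2) u L = expKernel (2 * u) (a + 1) (b + 1) (L / 2) := by
  have hprod (v : Fin (b + (a + 1)) → ℝ) :
      exp (2 * u * ∑ i with i.val < a + 1, v i)
        = (∏ i : Fin (b + (a + 1)), exp ((if i.val < a + 1 then 2 * u else 0) * v i))
          * exp ((if b + (a + 1) < a + 1 then 2 * u else 0) * (L / 2 - ∑ i, v i)) := by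
    rw [if_neg (by lia), zero_mul, exp_zero, mul_one, ← exp_sum, Finset.mul_sum, Finset.sum_filter]
    simp only [ite_mul, zero_mul]
  have hIkl : Ikl (b + a + 2) (a + 2) u L
      = ∫ v in openSimplex (b + (a + 1)) (L / 2),
        exp (2 * u * ∑ i with i.val < a + 1, v i) := rfl
  rw [hIkl, ← toReal_halfLine_expKernel _ a b (by positivity), ← iteratedLConvolution_expFactors]
  simp only [hprod]
  exact integral_openSimplex_prod_eq_toReal
    (g := fun i x => exp ((if i < a + 1 then 2 * u else 0) * x)) (fun i => by fun_prop)
    (fun i x _ => (exp_pos _).le) (L / 2)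

/-- The factor depending on `w_{i + 1}` of the integrand of `Itkl k (a + 2) u`, for `s = 2 * u`. -/
noncomputable def itklFactor (s : ℝ) (a : ℕ) : ℕ → ℝ → ℝ
  | 0 => fun x => (1 - exp (-x)) ^ s
  | i + 1 => fun x =>
    exp ((if i < a + 1 then -s else 0) * x) * (if i = a then (1 - exp (-x)) ^ (-s) else 1)

lemma measurable_itklFactor (s : ℝ) (a i : ℕ) : Measurable (itklFactor s a i) := by
  rcases i with _ | i
  · rw [itklFactor]
    fun_prop
  · rw [itklFactor]
    split_ifs <;> fun_prop

lemma itklFactor_nonneg (s : ℝ) (a i : ℕ) {x : ℝ} (hx : 0 < x) : 0 ≤ itklFactor s a i x := by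
  have := one_sub_exp_neg_pos hx
  rcases i with _ | i
  · rw [itklFactor]
    positivity
  · rw [itklFactor]
    split_ifs <;> positivity

lemma halfLine_itklFactor_succ (s : ℝ) (a : ℕ) :
    (fun i => halfLine (itklFactor s a (i + 1)))
      = Function.update (expFactors (-s) a) a
        (halfLine fun x => exp (-s * x) * (1 - exp (-x)) ^ (-s)) := by
  funext i
  rcases eq_or_ne i a with rfl | hi
  · simp [itklFactor]
  · have hlt : i < a + 1 ↔ i < a := by lia
    simp [itklFactor, expFactors, expHalfLine, hi, hlt]

lemma prod_range_itklFactor (s : ℝ) (a b : ℕ) (z : ℕ → ℝ) :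
    ∏ i ∈ Finset.range (b + a + 2), itklFactor s a i (z (i + 1))
      = exp (-s * ∑ j ∈ Finset.Icc 2 (a + 2), z j) * (1 - exp (-z (a + 2))) ^ (-s)
        * (1 - exp (-z 1)) ^ s := by
  have hsum : ∑ i ∈ Finset.range (b + a + 1), (if i < a + 1 then -s else 0) * z (i + 2)
      = -s * ∑ j ∈ Finset.Icc 2 (a + 2), z j := by
    have hfilter : {i ∈ Finset.range (b + a + 1) | i < a + 1} = Finset.range (a + 1) := by
      ext i
      simp only [Finset.mem_filter, Finset.mem_range]
      lia
    simp only [ite_mul, zero_mul]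
    rw [← Finset.sum_filter, hfilter, ← Finset.mul_sum, Finset.range_eq_Ico,
      Finset.sum_Ico_add' z 0 (a + 1) 2, zero_add, add_right_comm,
      Finset.Ico_add_one_right_eq_Icc]
  rw [Finset.prod_range_succ']
  simp only [itklFactor, Finset.prod_mul_distrib]
  rw [← exp_sum, hsum, Finset.prod_ite_eq', if_pos (by simp)]

lemma prod_wcoord (f : ℕ → ℝ → ℝ) (n : ℕ) (L : ℝ) (w : Fin n → ℝ) :
    (∏ i : Fin n, f i (w i)) * f n (L / 2 - ∑ i, w i)
      = ∏ i ∈ Finset.range (n + 1), f i (wcoord (n + 1) L w (i + 1)) := by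
  rw [Finset.prod_range_succ, ← Fin.prod_univ_eq_prod_range]
  simp [wcoord]

lemma Itkl_add_two_add_two (a b : ℕ) {u L : ℝ} (hu0 : u ≠ 0) (hu : |u| < 1 / 2) (hL : 0 ≤ L) :
    Itkl (b + a + 2) (a + 2) u L
      = 2 * π * u / sin (2 * π * u) * expKernel (-(2 * u)) (a + 1) (b + 1) (L / 2) := by
  have hs0 : 2 * u ≠ 0 := by positivity
  have hs : |2 * u| < 1 := by rw [abs_mul, abs_two]; linarith
  have hItkl : Itkl (b + a + 2) (a + 2) u L
      = ∫ w in openSimplex (b + a + 1) (L / 2),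
        (∏ i : Fin (b + a + 1), itklFactor (2 * u) a i (w i))
          * itklFactor (2 * u) a (b + a + 1) (L / 2 - ∑ i, w i) := by
    simp only [prod_wcoord, prod_range_itklFactor]
    rfl
  have hconv : iteratedLConvolution volume (b + a + 1) (fun i => halfLine (itklFactor (2 * u) a i))
      = ENNReal.ofReal (π * (2 * u) / sin (π * (2 * u)))
        • halfLine (expKernel (-(2 * u)) (a + 1) (b + 1)) := by
    rw [← iteratedLConvolution_expFactors, ← add_assoc, iteratedLConvolution,
      halfLine_itklFactor_succ, iteratedLConvolution]
    simp only [expFactors_succ_succ]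
    exact lconvolution_iteratedLConvolution_update
      (measurable_halfLine (measurable_itklFactor _ a 0)) (measurable_halfLine (by fun_prop))
      (measurable_expHalfLine _) (measurable_expFactors _ a) le_add_self
      (by simpa [expFactors, itklFactor] using
        halfLine_rpow_lconvolution_halfLine_exp_mul_rpow hs0 hs)
  rw [hItkl, integral_openSimplex_prod_eq_toReal (measurable_itklFactor (2 * u) a)
    (fun i x hx => itklFactor_nonneg _ a i hx), hconv, Pi.smul_apply, smul_eq_mul,
    ENNReal.toReal_mul, ENNReal.toReal_ofReal (pi_mul_div_sin_pi_mul_nonneg hs0 hs),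
    toReal_halfLine_expKernel _ a b (by positivity), mul_left_comm, ← mul_assoc]

lemma sum_Icc_Ikl_mul_Itkl (n : ℕ) {u L : ℝ} (hu0 : u ≠ 0) (hu : |u| < 1 / 2) (hL : 0 ≤ L) :
    ∑ l ∈ Finset.Icc 2 (n + 2), Ikl (n + 2) l u L * Itkl (n + 2) l u L
      = 2 * π * u / sin (2 * π * u) * ∑ c ∈ antidiagonal n,
        expKernel (2 * u) (c.1 + 1) (c.2 + 1) (L / 2)
          * expKernel (-(2 * u)) (c.1 + 1) (c.2 + 1) (L / 2) := by
  rw [sum_Icc_two_eq_sum_antidiagonal, Finset.mul_sum]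
  refine Finset.sum_congr rfl fun c hc => ?_
  rw [← Finset.HasAntidiagonal.mem_antidiagonal.1 hc, add_comm c.1 c.2,
    Ikl_add_two_add_two _ _ _ hL, Itkl_add_two_add_two _ _ hu0 hu hL, mul_left_comm]

end SimplexIntegrals

section DoubleSeries

/-- The coefficient `u ^ (2 * p) / (2 * p + 1)‼`, with the double factorial written as
`(2 * p + 1)! / (2 ^ p * p!)`. -/
noncomputable def oddFactorialCoeff (u : ℝ) (p : ℕ) : ℝ :=
  u ^ (2 * p) / ((2 * p + 1)! / (2 ^ p * p !))

/-- The term of degree `j` of the power series in `r` of the `(p + 1)`-st `r`-derivative of the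
modified Bessel function `I₀ (L * √(2 * r))`. -/
noncomputable def besselDerivTerm (L r : ℝ) (p j : ℕ) : ℝ :=
  L ^ (2 * (p + 1 + j)) * r ^ j / (2 ^ (p + 1 + j) * (p + 1 + j)! * j !)

lemma abs_oddFactorialCoeff_le (u : ℝ) (p : ℕ) : |oddFactorialCoeff u p| ≤ (u ^ 2) ^ p := by
  have hle : (2 ^ p * p ! : ℝ) ≤ (2 * p + 1)! := mod_cast
    (Nat.two_pow_mul_factorial_le_factorial_two_mul p).trans (Nat.factorial_le (by lia))
  have hone : (1 : ℝ) ≤ (2 * p + 1)! / (2 ^ p * p !) := (one_le_div (by positivity)).2 hle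
  rw [oddFactorialCoeff, pow_mul, abs_of_nonneg (by positivity)]
  exact div_le_self (by positivity) hone

lemma abs_besselDerivTerm_le (L r : ℝ) (p j : ℕ) :
    |besselDerivTerm L r p j|
      ≤ L ^ 2 / 2 * ((L ^ 2 / 2) ^ p / p !) * ((L ^ 2 / 2 * |r|) ^ j / j !) := by
  have hfact : (p ! : ℝ) ≤ (p + 1 + j)! := mod_cast Nat.factorial_le (by lia)
  calc |besselDerivTerm L r p j|
      = (L ^ 2) ^ (p + 1 + j) * |r| ^ j / (2 ^ (p + 1 + j) * (p + 1 + j)! * j !) := by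
        simp only [besselDerivTerm, pow_mul, abs_div, abs_mul, abs_pow, sq_abs, abs_two,
          Nat.abs_cast]
    _ ≤ (L ^ 2) ^ (p + 1 + j) * |r| ^ j / (2 ^ (p + 1 + j) * p ! * j !) := by gcongr
    _ = L ^ 2 / 2 * ((L ^ 2 / 2) ^ p / p !) * ((L ^ 2 / 2 * |r|) ^ j / j !) := by
        rw [mul_pow, div_pow, div_pow]
        field_simp
        ring

lemma summable_besselDerivTerm (L r : ℝ) (p : ℕ) : Summable (besselDerivTerm L r p) :=
  .of_norm_bounded ((summable_pow_div_factorial _).mul_left _) (abs_besselDerivTerm_le L r p)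

lemma summable_oddFactorialCoeff_mul_besselDerivTerm (u L r : ℝ) :
    Summable fun x : ℕ × ℕ => oddFactorialCoeff u x.1 * besselDerivTerm L r x.1 x.2 := by
  have hp : Summable fun p : ℕ => L ^ 2 / 2 * ((u ^ 2 * (L ^ 2 / 2)) ^ p / p !) :=
    (summable_pow_div_factorial _).mul_left _
  have hj : Summable fun j : ℕ => (L ^ 2 / 2 * |r|) ^ j / j ! := summable_pow_div_factorial _
  refine .of_norm_bounded (hp.mul_of_nonneg hj (fun p => by positivity) fun j => by positivity)
    fun ⟨p, j⟩ => ?_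
  calc ‖oddFactorialCoeff u p * besselDerivTerm L r p j‖
      = |oddFactorialCoeff u p| * |besselDerivTerm L r p j| := abs_mul _ _
    _ ≤ (u ^ 2) ^ p * (L ^ 2 / 2 * ((L ^ 2 / 2) ^ p / p !) * ((L ^ 2 / 2 * |r|) ^ j / j !)) :=
        mul_le_mul (abs_oddFactorialCoeff_le u p) (abs_besselDerivTerm_le L r p j) (abs_nonneg _)
          (by positivity)
    _ = L ^ 2 / 2 * ((u ^ 2 * (L ^ 2 / 2)) ^ p / p !) * ((L ^ 2 / 2 * |r|) ^ j / j !) := by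
        rw [mul_pow]
        ring

lemma hasSum_oddFactorialCoeff_mul_besselDerivTerm {u : ℝ} (hu0 : u ≠ 0) (L r : ℝ) (n : ℕ) :
    HasSum (fun p => oddFactorialCoeff u p * besselDerivTerm L r p n)
      (r ^ n * 2 ^ (n + 1) * ∑ c ∈ antidiagonal n, expKernel (2 * u) (c.1 + 1) (c.2 + 1) (L / 2)
        * expKernel (-(2 * u)) (c.1 + 1) (c.2 + 1) (L / 2)) := by
  have hs : 2 * u ≠ 0 := mul_ne_zero two_ne_zero hu0
  refine ((hasSum_sum_antidiagonal_expKernel hs (L / 2) n).mul_left (r ^ n * 2 ^ (n + 1))).congr_fun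
    fun p => ?_
  rw [oddFactorialCoeff, besselDerivTerm, div_pow, mul_pow,
    show (2 : ℝ) ^ (2 * (p + 1 + n)) = 2 ^ p * 2 ^ (n + 1) * 2 ^ (p + 1 + n) by ring,
    show (2 : ℝ) ^ (2 * p) = 2 ^ p * 2 ^ p by ring]
  field_simp

end DoubleSeries

theorem stmt_8_general {u : ℝ} (hu0 : u ≠ 0) (hu : |u| < 1 / 2) {L : ℝ} (hL : 0 ≤ L) (r : ℝ) :
    Summable (fun n : ℕ => |r ^ n * 2 ^ (n + 1)
      * ∑ l ∈ Finset.Icc 2 (n + 2), Ikl (n + 2) l u L * Itkl (n + 2) l u L|) ∧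
    (∀ p, Summable fun j => |besselDerivTerm L r p j|) ∧
    Summable (fun p => |oddFactorialCoeff u p * ∑' j, besselDerivTerm L r p j|) ∧
    ∑' n : ℕ, r ^ n * 2 ^ (n + 1)
        * ∑ l ∈ Finset.Icc 2 (n + 2), Ikl (n + 2) l u L * Itkl (n + 2) l u L
      = 2 * π * u / sin (2 * π * u)
        * ∑' p, oddFactorialCoeff u p * ∑' j, besselDerivTerm L r p j := by
  have hdouble := summable_oddFactorialCoeff_mul_besselDerivTerm u L r
  have hleft (n : ℕ) : r ^ n * 2 ^ (n + 1)
        * ∑ l ∈ Finset.Icc 2 (n + 2), Ikl (n + 2) l u L * Itkl (n + 2) l u L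
      = 2 * π * u / sin (2 * π * u) * ∑' p, oddFactorialCoeff u p * besselDerivTerm L r p n := by
    rw [sum_Icc_Ikl_mul_Itkl n hu0 hu hL, mul_left_comm,
      (hasSum_oddFactorialCoeff_mul_besselDerivTerm hu0 L r n).tsum_eq]
  have hright (p : ℕ) : oddFactorialCoeff u p * ∑' j, besselDerivTerm L r p j
      = ∑' j, oddFactorialCoeff u p * besselDerivTerm L r p j := tsum_mul_left.symm
  simp only [hleft, hright]
  refine ⟨(hdouble.prod_symm.prod.mul_left _).abs, fun p => (summable_besselDerivTerm L r p).abs,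
    hdouble.prod.abs, ?_⟩
  rw [tsum_mul_left, hdouble.tsum_comm]

/-- **Proposition 5.2 (distance-dependent generating function around a boundary
vertex).** For `0 < |u| < 1/2`, `L ≥ 0`, `r ≥ 0`:
`∑_{k≥2} r^{k−2} 2^{k−1} ∑_{ℓ=2}^k I_{k,ℓ}(u,L) Ĩ_{k,ℓ}(u,L)
  = (2πu/sin(2πu)) ∑_{p≥0} (u^{2p}/(2p+1)!!) ∑_{m≥p+1} L^{2m} r^{m−p−1}/(2^m m! (m−p−1)!)`,
with `(2p+1)!! = (2p+1)!/(2^p p!)`, all series converging absolutely. The outer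
`k`-series is indexed by `k = n+2` and the inner `m`-series by `m = p+1+j`. -/
theorem stmt_8 (u L r : ℝ) (hu0 : 0 < |u|) (hu : |u| < 1/2) (hL : 0 ≤ L) (hr : 0 ≤ r) :
    Summable (fun n : ℕ =>
        |r^n * (2:ℝ)^(n+1)
          * ∑ l ∈ Finset.Icc 2 (n+2), Ikl (n+2) l u L * Itkl (n+2) l u L|) ∧
    (∀ p : ℕ, Summable (fun j : ℕ =>
        |L^(2*(p+1+j)) * r^j
          / ((2:ℝ)^(p+1+j) * ((p+1+j).factorial : ℝ) * (j.factorial : ℝ))|)) ∧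
    Summable (fun p : ℕ =>
        |(u^(2*p) / (((2*p+1).factorial : ℝ) / ((2:ℝ)^p * (p.factorial : ℝ))))
          * ∑' j : ℕ, L^(2*(p+1+j)) * r^j
              / ((2:ℝ)^(p+1+j) * ((p+1+j).factorial : ℝ) * (j.factorial : ℝ))|) ∧
    ∑' n : ℕ, r^n * (2:ℝ)^(n+1)
        * ∑ l ∈ Finset.Icc 2 (n+2), Ikl (n+2) l u L * Itkl (n+2) l u L
      = (2*π*u / Real.sin (2*π*u))
        * ∑' p : ℕ, (u^(2*p) / (((2*p+1).factorial : ℝ) / ((2:ℝ)^p * (p.factorial : ℝ))))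
            * ∑' j : ℕ, L^(2*(p+1+j)) * r^j
                / ((2:ℝ)^(p+1+j) * ((p+1+j).factorial : ℝ) * (j.factorial : ℝ)) :=
  stmt_8_general (abs_pos.1 hu0) hu hL r
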